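/- arXiv:1911.10481 — 2 statements merged into one kernel-verified Lean document; each statement's English description precedes it below -/
import Mathlib

section
/- Let λ ≥ 0 and F(k) = (2/3)(2π)⁻³ χ(|k|)² |k| for k ∈ ℝ³. Then lim_{ε→0⁺} ∫_{ℝ³×(0,∞)} F(k) cos(t(|k| + λ)) e^{−εt} dk dt = 0. -/
noncomputable section
open MeasureTheory

/-- `F(k) = (2/3)(2π)⁻³ χ(|k|)² |k|`. -/
def F (χ : SchwartzMap ℝ ℝ) (k : EuclideanSpace ℝ (Fin 3)) : ℝ :=
  (2 / 3) * ((2 * Real.pi) ^ 3)⁻¹ * (χ ‖k‖) ^ 2 * ‖k‖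

lemma time_int (a ε : ℝ) (hε : 0 < ε) :
    ∫ t in Set.Ioi (0 : ℝ), Real.cos (t * a) * Real.exp (-ε * t) = ε / (ε ^ 2 + a ^ 2) := by
  have hre : ((-ε : ℂ) + a * Complex.I).re < 0 := by simp [hε]
  have h := integral_exp_mul_complex_Ioi hre 0
  have hi := integrableOn_exp_mul_complex_Ioi hre 0
  have h2 : ∀ t : ℝ, Real.cos (t * a) * Real.exp (-ε * t)
      = RCLike.re (Complex.exp (((-ε : ℂ) + a * Complex.I) * t)) := by
    intro t
    simp [Complex.exp_re]
    ring_nf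
  simp_rw [h2]
  rw [integral_re hi, h]
  simp [Complex.div_re, Complex.normSq_apply]
  ring_nf

lemma chi_bound (χ : SchwartzMap ℝ ℝ) : ∃ C : ℝ, 0 ≤ C ∧ ∀ x : ℝ, 0 ≤ x →
    (χ x) ^ 2 * (1 + x) ≤ C * (1 + x) ^ (-(5 : ℝ)) := by
  have h := fun x => SchwartzMap.one_add_le_sup_seminorm_apply (𝕜 := ℝ) (m := (3, 0))
    (k := 3) (n := 0) le_rfl le_rfl χ x
  set C := 2 ^ (3, 0).1 * ((Finset.Iic (3, 0)).sup fun m => SchwartzMap.seminorm ℝ m.1 m.2) χ with hC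
  refine ⟨C ^ 2, by positivity, fun x hx => ?_⟩
  have h1 := h x
  simp only [norm_iteratedFDeriv_zero, Real.norm_eq_abs, abs_of_nonneg hx] at h1
  have h3 : ((1 + x) ^ 3 * |χ x|) ^ 2 ≤ C ^ 2 := by
    gcongr
  rw [mul_pow, sq_abs] at h3
  rw [Real.rpow_neg (by positivity), ← div_eq_mul_inv, le_div_iff₀ (by positivity)]
  have h5 : (1 + x) ^ (5 : ℝ) = (1 + x) ^ (5 : ℕ) := by
    exact_mod_cast Real.rpow_natCast (1 + x) 5
  rw [h5]
  calc (χ x) ^ 2 * (1 + x) * (1 + x) ^ 5 = ((1 + x) ^ 3) ^ 2 * (χ x) ^ 2 := by ring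
    _ ≤ C ^ 2 := h3

theorem stmt5 (χ : SchwartzMap ℝ ℝ) (lam : ℝ) (hlam : 0 ≤ lam) :
    Filter.Tendsto
      (fun ε : ℝ =>
        ∫ p : EuclideanSpace ℝ (Fin 3) × ℝ in Set.univ ×ˢ Set.Ioi (0 : ℝ),
          F χ p.1 * Real.cos (p.2 * (‖p.1‖ + lam)) * Real.exp (-ε * p.2))
      (nhdsWithin 0 (Set.Ioi 0)) (nhds 0) := by
  obtain ⟨C, hC0, hC⟩ := chi_bound χ
  set c : ℝ := (2 / 3) * ((2 * Real.pi) ^ 3)⁻¹ with hc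
  have hc0 : 0 ≤ c := by positivity
  have hFdef : ∀ k, F χ k = c * (χ ‖k‖) ^ 2 * ‖k‖ := fun k => rfl
  have hG : Integrable (fun k : EuclideanSpace ℝ (Fin 3) => c * (C * (1 + ‖k‖) ^ (-(5 : ℝ)))) := by
    refine ((integrable_one_add_norm ?_).const_mul C).const_mul c
    simp; norm_num
  have hFc : Continuous (F χ) := by
    have : Continuous (fun k : EuclideanSpace ℝ (Fin 3) => c * (χ ‖k‖) ^ 2 * ‖k‖) := by
      have := χ.continuous
      fun_prop
    exact this
  have hb1 : ∀ k : EuclideanSpace ℝ (Fin 3),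
      c * (χ ‖k‖) ^ 2 * (1 + ‖k‖) ≤ c * (C * (1 + ‖k‖) ^ (-(5 : ℝ))) := by
    intro k
    rw [mul_assoc]
    exact mul_le_mul_of_nonneg_left (hC _ (norm_nonneg k)) hc0
  have hF0 : ∀ k, 0 ≤ F χ k := fun k => by rw [hFdef]; positivity
  have hFi : Integrable (F χ) := by
    refine hG.mono' hFc.aestronglyMeasurable (Filter.Eventually.of_forall fun k => ?_)
    rw [Real.norm_of_nonneg (hF0 k), hFdef]
    refine le_trans ?_ (hb1 k)
    gcongr
    linarith
  have key : ∀ ε : ℝ, 0 < ε →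
      ∫ p : EuclideanSpace ℝ (Fin 3) × ℝ in Set.univ ×ˢ Set.Ioi (0 : ℝ),
          F χ p.1 * Real.cos (p.2 * (‖p.1‖ + lam)) * Real.exp (-ε * p.2)
      = ∫ k, F χ k * (ε / (ε ^ 2 + (‖k‖ + lam) ^ 2)) := by
    intro ε hε
    have hint : IntegrableOn (fun p : EuclideanSpace ℝ (Fin 3) × ℝ =>
        F χ p.1 * Real.cos (p.2 * (‖p.1‖ + lam)) * Real.exp (-ε * p.2))
        (Set.univ ×ˢ Set.Ioi (0 : ℝ)) (volume.prod volume) := by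
      have he : IntegrableOn (fun t : ℝ => Real.exp (-ε * t)) (Set.Ioi 0) :=
        exp_neg_integrableOn_Ioi 0 hε
      have hm := hFi.mul_prod he
      unfold IntegrableOn
      rw [← Measure.prod_restrict, Measure.restrict_univ]
      refine hm.mono ?_ (Filter.Eventually.of_forall fun p => ?_)
      · apply Continuous.aestronglyMeasurable
        fun_prop
      · simp only [norm_mul]
        have : ‖Real.cos (p.2 * (‖p.1‖ + lam))‖ ≤ 1 := Real.abs_cos_le_one _
        gcongr
        exact mul_le_of_le_one_right (norm_nonneg _) this
    rw [Measure.volume_eq_prod, setIntegral_prod _ hint, setIntegral_univ]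
    congr 1
    ext k
    simp_rw [mul_assoc]
    rw [integral_const_mul]
    congr 1
    exact time_int _ _ hε
  have hlim : Filter.Tendsto (fun ε : ℝ => ∫ k, F χ k * (ε / (ε ^ 2 + (‖k‖ + lam) ^ 2)))
      (nhdsWithin 0 (Set.Ioi 0)) (nhds (∫ _ : EuclideanSpace ℝ (Fin 3), (0 : ℝ))) := by
    refine tendsto_integral_filter_of_dominated_convergence _ ?_ ?_ hG ?_
    · filter_upwards [self_mem_nhdsWithin] with ε hε
      have hε : 0 < ε := hε
      apply Continuous.aestronglyMeasurable
      refine hFc.mul (Continuous.div (by fun_prop) (by fun_prop) fun k => ?_)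
      positivity
    · filter_upwards [self_mem_nhdsWithin] with ε hε
      have hε : 0 < ε := hε
      refine Filter.Eventually.of_forall fun k => ?_
      rw [Real.norm_of_nonneg (mul_nonneg (hF0 k) (by positivity)), hFdef]
      refine le_trans ?_ (hb1 k)
      rw [mul_assoc]
      gcongr
      have hk := norm_nonneg k
      rw [← mul_div_assoc, div_le_iff₀ (by positivity)]
      have h1 : ‖k‖ ^ 2 ≤ (‖k‖ + lam) ^ 2 := by gcongr; linarith
      nlinarith [sq_nonneg (‖k‖ - ε), mul_nonneg hk (by positivity : 0 ≤ ε ^ 2 + (‖k‖ + lam) ^ 2)]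
    · refine Filter.Eventually.of_forall fun k => ?_
      rcases (norm_nonneg k).eq_or_lt with h | h
      · simp [hFdef, ← h]
      · have hct : ContinuousAt (fun ε : ℝ => F χ k * (ε / (ε ^ 2 + (‖k‖ + lam) ^ 2))) 0 := by
          refine continuousAt_const.mul (ContinuousAt.div (by fun_prop) (by fun_prop) ?_)
          positivity
        have := hct.tendsto
        simp only [zero_div, mul_zero] at this
        exact this.mono_left nhdsWithin_le_nhds
  rw [integral_zero] at hlim
  refine hlim.congr' ?_
  filter_upwards [self_mem_nhdsWithin] with ε hε
  exact (key ε hε).symm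
end
end

section
/- Let β > 0 and let L be the GKLS operator built from the concrete coefficients d₁, d₀, d₋₁. Then the linear map L : M₂(ℂ) → M₂(ℂ) has I, σ(1), σ(0) + I and σ(−1) as eigenvectors: L(I) = 0, and there exist complex numbers μ₁, μ₀, μ₋₁ with L(σ(1)) = μ₁ σ(1), L(σ(0) + I) = μ₀ (σ(0) + I), L(σ(−1)) = μ₋₁ σ(−1), such that Re μ₁ ≤ 0, Re μ₀ ≤ 0, Re μ₋₁ ≤ 0. If moreover χ(2β) > 0 (the Fermi Golden Rule hypothesis), then Re μ₁ < 0, Re μ₀ < 0 and Re μ₋₁ < 0. -/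
noncomputable section
open MeasureTheory Complex

def u (χ : SchwartzMap ℝ ℝ) (t : ℝ) : ℂ :=
  ((2 / (3 * (2 * Real.pi) ^ 3) : ℝ) : ℂ) *
    ∫ k : EuclideanSpace ℝ (Fin 3), (((χ ‖k‖) ^ 2 * ‖k‖ : ℝ) : ℂ) * Complex.exp (-(t * ‖k‖) * Complex.I)

/-- `d_m = ∫₀^∞ u(t) e^{2imβt} dt`. -/
def dcoef (χ : SchwartzMap ℝ ℝ) (β : ℝ) (m : ℤ) : ℂ :=
  ∫ t in Set.Ioi (0 : ℝ), u χ t * Complex.exp (2 * m * β * t * Complex.I)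

def σ1 : Matrix (Fin 2) (Fin 2) ℂ := !![0, 1; 1, 0]
def σ2 : Matrix (Fin 2) (Fin 2) ℂ := !![0, -Complex.I; Complex.I, 0]
def σ3 : Matrix (Fin 2) (Fin 2) ℂ := !![1, 0; 0, -1]

/-- `σ(m)` for `m ∈ {1, 0, -1}`. -/
def pσ (m : ℤ) : Matrix (Fin 2) (Fin 2) ℂ :=
  if m = 1 then ((Real.sqrt 2 : ℂ))⁻¹ • (σ1 + Complex.I • σ2)
  else if m = 0 then σ3
  else ((Real.sqrt 2 : ℂ))⁻¹ • (σ1 - Complex.I • σ2)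

/-- `H_L = Σ_m (Im d_m) σ(m)σ(−m)`. -/
def HL (d1 d0 dm1 : ℂ) : Matrix (Fin 2) (Fin 2) ℂ :=
  (d1.im : ℂ) • (pσ 1 * pσ (-1)) + (d0.im : ℂ) • (pσ 0 * pσ 0) +
    (dm1.im : ℂ) • (pσ (-1) * pσ 1)

/-- The GKLS operator built from `d₁, d₀, d₋₁`. -/
def Lop (d1 d0 dm1 : ℂ) (A : Matrix (Fin 2) (Fin 2) ℂ) : Matrix (Fin 2) (Fin 2) ℂ :=
  (d1.re : ℂ) • (pσ 1 * A * pσ (-1) -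
      (2 : ℂ)⁻¹ • (A * (pσ 1 * pσ (-1)) + (pσ 1 * pσ (-1)) * A)) +
    (d0.re : ℂ) • (pσ 0 * A * pσ 0 -
      (2 : ℂ)⁻¹ • (A * (pσ 0 * pσ 0) + (pσ 0 * pσ 0) * A)) +
    (dm1.re : ℂ) • (pσ (-1) * A * pσ 1 -
      (2 : ℂ)⁻¹ • (A * (pσ (-1) * pσ 1) + (pσ (-1) * pσ 1) * A)) -
    (Complex.I / 2) • (A * HL d1 d0 dm1 - HL d1 d0 dm1 * A)


lemma sqrt2_inv_sq : ((Real.sqrt 2 : ℂ))⁻¹ * ((Real.sqrt 2 : ℂ))⁻¹ = 2⁻¹ := by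
  rw [← mul_inv, ← Complex.ofReal_mul, Real.mul_self_sqrt (by norm_num)]; norm_num

lemma pσ_one : pσ 1 = ((Real.sqrt 2 : ℂ))⁻¹ • !![0, 2; 0, 0] := by
  simp only [pσ, σ1, σ2, if_true]
  congr 1
  ext i j; fin_cases i <;> fin_cases j <;> simp; norm_num
lemma pσ_zero : pσ 0 = !![1, 0; 0, -1] := by
  simp [pσ, σ3]
lemma pσ_neg : pσ (-1) = ((Real.sqrt 2 : ℂ))⁻¹ • !![0, 0; 2, 0] := by
  have : pσ (-1) = ((Real.sqrt 2 : ℂ))⁻¹ • (σ1 - Complex.I • σ2) := by simp [pσ]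
  rw [this, σ1, σ2]
  congr 1
  ext i j; fin_cases i <;> fin_cases j <;> simp; norm_num

lemma pσ_mul : pσ 1 * pσ (-1) = !![2, 0; 0, 0] := by
  rw [pσ_one, pσ_neg]
  simp only [Matrix.smul_mul, Matrix.mul_smul, smul_smul, sqrt2_inv_sq]
  ext i j; fin_cases i <;> fin_cases j <;> simp 
lemma pσ_mul' : pσ (-1) * pσ 1 = !![0, 0; 0, 2] := by
  rw [pσ_one, pσ_neg]
  simp only [Matrix.smul_mul, Matrix.mul_smul, smul_smul, sqrt2_inv_sq]
  ext i j; fin_cases i <;> fin_cases j <;> simp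
lemma pσ_sand (a b c d : ℂ) : pσ 1 * !![a, b; c, d] * pσ (-1) = !![2 * d, 0; 0, 0] := by
  rw [pσ_one, pσ_neg]
  simp only [Matrix.smul_mul, Matrix.mul_smul, smul_smul, sqrt2_inv_sq]
  ext i j; fin_cases i <;> fin_cases j <;> simp; ring
lemma pσ_sand' (a b c d : ℂ) : pσ (-1) * !![a, b; c, d] * pσ 1 = !![0, 0; 0, 2 * a] := by
  rw [pσ_one, pσ_neg]
  simp only [Matrix.smul_mul, Matrix.mul_smul, smul_smul, sqrt2_inv_sq]
  ext i j; fin_cases i <;> fin_cases j <;> simp; ring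

lemma Lop_apply (d1 d0 dm1 : ℂ) (A : Matrix (Fin 2) (Fin 2) ℂ) :
    Lop d1 d0 dm1 A = !![2 * d1.re * (A 1 1 - A 0 0),
        (-(d1.re + 2 * d0.re + dm1.re) - I * (dm1.im - d1.im)) * A 0 1;
        (-(d1.re + 2 * d0.re + dm1.re) + I * (dm1.im - d1.im)) * A 1 0,
        2 * dm1.re * (A 0 0 - A 1 1)] := by
  obtain ⟨a, b, c, d, rfl⟩ : ∃ a b c d, A = !![a, b; c, d] := ⟨_, _, _, _, Matrix.eta_fin_two A⟩
  rw [Lop, HL, pσ_sand, pσ_sand', pσ_mul, pσ_mul', pσ_zero]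
  ext i j
  fin_cases i <;> fin_cases j <;> simp <;> ring

lemma final (d1 d0 dm1 : ℂ) (h1 : 0 ≤ d1.re) (h0 : d0.re = 0) (hm : dm1.re = 0) :
    Lop d1 d0 dm1 1 = 0 ∧
      ∃ μ1 μ0 μm1 : ℂ,
        Lop d1 d0 dm1 (pσ 1) = μ1 • pσ 1 ∧
        Lop d1 d0 dm1 (pσ 0 + 1) = μ0 • (pσ 0 + 1) ∧
        Lop d1 d0 dm1 (pσ (-1)) = μm1 • pσ (-1) ∧
        μ1.re ≤ 0 ∧ μ0.re ≤ 0 ∧ μm1.re ≤ 0 ∧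
        (0 < d1.re → μ1.re < 0 ∧ μ0.re < 0 ∧ μm1.re < 0) := by
  refine ⟨?_, -(d1.re + 2 * d0.re + dm1.re) - I * (dm1.im - d1.im), -2 * d1.re,
    -(d1.re + 2 * d0.re + dm1.re) + I * (dm1.im - d1.im), ?_, ?_, ?_, ?_, ?_, ?_, ?_⟩
  · rw [Lop_apply]
    ext i j; fin_cases i <;> fin_cases j <;> simp
  · rw [Lop_apply, pσ_one]
    ext i j; fin_cases i <;> fin_cases j <;> simp
  · rw [Lop_apply, pσ_zero, hm]
    ext i j; fin_cases i <;> fin_cases j <;> simp <;> ring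
  · rw [Lop_apply, pσ_neg]
    ext i j; fin_cases i <;> fin_cases j <;> simp
  · simp [h0, hm, h1]
  · simp [h1]
  · simp [h0, hm, h1]
  · intro h
    simp [h0, hm, h]

open FourierTransform in
lemma int_of_decay {f : ℝ → ℂ} (hf : Integrable f) (h1 : Differentiable ℝ f)
    (hf1 : Integrable (deriv f)) (h2 : Differentiable ℝ (deriv f))
    (hf2 : Integrable (deriv (deriv f))) : Integrable (𝓕 f) := by
  have e1 := Real.fourier_deriv hf h1 hf1
  have e2 := Real.fourier_deriv hf1 h2 hf2
  have hc : Continuous (𝓕 f) :=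
    VectorFourier.fourierIntegral_continuous Real.continuous_fourierChar
      (by exact continuous_inner) hf
  have b0 : ∀ x, ‖𝓕 f x‖ ≤ ∫ v, ‖f v‖ := fun x =>
    VectorFourier.norm_fourierIntegral_le_integral_norm _ _ _ _ _
  have b2 : ∀ x, ‖𝓕 (deriv (deriv f)) x‖ ≤ ∫ v, ‖deriv (deriv f) v‖ := fun x =>
    VectorFourier.norm_fourierIntegral_le_integral_norm _ _ _ _ _
  set A := ∫ v, ‖f v‖
  set B := ∫ v, ‖deriv (deriv f) v‖
  have key : ∀ x, ‖𝓕 f x‖ ≤ (A + B) * (1 + x ^ 2)⁻¹ := by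
    intro x
    have h := b2 x
    rw [e2, e1] at h
    simp only [norm_smul, norm_mul, Complex.norm_real, Complex.norm_I, Real.norm_eq_abs,
      Complex.norm_ofNat, abs_of_pos Real.pi_pos] at h
    rw [← div_eq_mul_inv, le_div_iff₀ (by positivity)]
    have h3 : x ^ 2 * ‖𝓕 f x‖ ≤ B := by
      refine le_trans ?_ h
      have : 2 * Real.pi * 1 * |x| * (2 * Real.pi * 1 * |x| * ‖𝓕 f x‖)
        = (4 * Real.pi ^ 2) * (x ^ 2 * ‖𝓕 f x‖) := by
        rw [← sq_abs x]; ring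
      rw [this]
      have : 1 ≤ 4 * Real.pi ^ 2 := by nlinarith [Real.pi_gt_three]
      have h0 : 0 ≤ x ^ 2 * ‖𝓕 f x‖ := by positivity
      nlinarith
    linarith [b0 x]
  exact (integrable_inv_one_add_sq.const_mul (A + B)).mono' hc.aestronglyMeasurable
    (Filter.Eventually.of_forall key)

/-- `r_+^n φ(r)` -/
def trunc (n : ℕ) (φ : SchwartzMap ℝ ℂ) (r : ℝ) : ℂ := ((max r 0 ^ n : ℝ) : ℂ) * φ r

lemma trunc_cont (n : ℕ) (φ : SchwartzMap ℝ ℂ) : Continuous (trunc n φ) := by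
  unfold trunc
  have := φ.continuous
  fun_prop

lemma trunc_int (n : ℕ) (φ : SchwartzMap ℝ ℂ) : Integrable (trunc n φ) := by
  refine (φ.integrable_pow_mul volume n).mono' (trunc_cont n φ).aestronglyMeasurable
    (Filter.Eventually.of_forall fun x => ?_)
  rw [trunc, norm_mul, Complex.norm_real, norm_pow]
  gcongr
  rw [Real.norm_eq_abs, Real.norm_eq_abs, abs_of_nonneg (le_max_right _ _)]
  exact max_le (le_abs_self x) (abs_nonneg x)

lemma max_hasDeriv (n : ℕ) (x : ℝ) :
    HasDerivAt (fun r : ℝ => max r 0 ^ (n + 2)) ((n + 2) * max x 0 ^ (n + 1)) x := by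
  rcases lt_trichotomy x 0 with h | h | h
  · have : (fun r : ℝ => max r 0 ^ (n + 2)) =ᶠ[nhds x] fun _ => 0 := by
      filter_upwards [gt_mem_nhds h] with y hy
      simp [max_eq_right hy.le]
    simpa [max_eq_right h.le] using (hasDerivAt_const x (0 : ℝ)).congr_of_eventuallyEq this
  · subst h
    simp only [max_self, ne_eq, Nat.add_eq_zero_iff, one_ne_zero, and_false, not_false_eq_true, zero_pow, mul_zero]
    rw [hasDerivAt_iff_isLittleO_nhds_zero]
    simp only [zero_add, max_self, smul_zero, sub_zero, ne_eq, Nat.add_eq_zero_iff, OfNat.ofNat_ne_zero, and_false, not_false_eq_true, zero_pow]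
    refine Asymptotics.IsBigO.trans_isLittleO (g := fun h : ℝ => h ^ (n + 2)) ?_ ?_
    · refine Asymptotics.IsBigO.of_bound 1 (Filter.Eventually.of_forall fun y => ?_)
      rw [norm_pow, norm_pow, one_mul]
      gcongr
      rw [Real.norm_eq_abs, Real.norm_eq_abs, abs_of_nonneg (le_max_right _ _)]
      exact max_le (le_abs_self y) (abs_nonneg y)
    · exact Asymptotics.isLittleO_pow_id (by omega)
  · have : (fun r : ℝ => max r 0 ^ (n + 2)) =ᶠ[nhds x] fun r => r ^ (n + 2) := by
      filter_upwards [lt_mem_nhds h] with y hy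
      simp [max_eq_left hy.le]
    have h2 := (hasDerivAt_pow (n + 2) x).congr_of_eventuallyEq this
    rw [max_eq_left h.le]
    convert! h2 using 1
    push_cast; rfl

lemma trunc_hasDeriv (n : ℕ) (φ : SchwartzMap ℝ ℂ) (x : ℝ) :
    HasDerivAt (trunc (n + 2) φ)
      ((n + 2) * trunc (n + 1) φ x + trunc (n + 2) (SchwartzMap.derivCLM ℂ ℂ φ) x) x := by
  have h := ((max_hasDeriv n x).ofReal_comp).mul (φ.differentiableAt (x := x)).hasDerivAt
  unfold trunc
  convert! h using 1
  simp [SchwartzMap.derivCLM_apply]; ring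

open FourierTransform in
lemma trunc_fourier_int (φ : SchwartzMap ℝ ℂ) : Integrable (𝓕 (trunc 3 φ)) := by
  set ψ := SchwartzMap.derivCLM ℂ ℂ φ with hψ
  set θ := SchwartzMap.derivCLM ℂ ℂ ψ with hθ
  have h1 := trunc_hasDeriv 1 φ
  have d1 : deriv (trunc 3 φ) = fun x => 3 * trunc 2 φ x + trunc 3 ψ x := by
    ext x
    rw [(h1 x).deriv]; norm_num [hψ]
  have h2 : ∀ x, HasDerivAt (fun x => 3 * trunc 2 φ x + trunc 3 ψ x)
    (3 * (2 * trunc 1 φ x + trunc 2 ψ x) + (3 * trunc 2 ψ x + trunc 3 θ x)) x := by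
    intro x
    have := ((trunc_hasDeriv 0 φ x).const_mul 3).add (trunc_hasDeriv 1 ψ x)
    norm_num at this
    exact this
  have d2 := funext fun x => (h2 x).deriv
  refine int_of_decay (trunc_int 3 φ) (fun x => (h1 x).differentiableAt) ?_ ?_ ?_
  · rw [d1]
    exact ((trunc_int 2 φ).const_mul 3).add (trunc_int 3 ψ)
  · rw [d1]
    exact fun x => (h2 x).differentiableAt
  · rw [d1, d2]
    exact ((((trunc_int 1 φ).const_mul 2).add (trunc_int 2 ψ)).const_mul 3).add
      (((trunc_int 2 ψ).const_mul 3).add (trunc_int 3 θ))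

lemma exists_sq (χ : SchwartzMap ℝ ℝ) : ∃ φ : SchwartzMap ℝ ℂ, ∀ x, φ x = ((χ x ^ 2 : ℝ) : ℂ) := by
  refine ⟨SchwartzMap.postcompCLM (𝕜 := ℝ) Complex.ofRealCLM (SchwartzMap.smulLeftCLM ℝ χ χ), fun x => ?_⟩
  rw [SchwartzMap.postcompCLM_apply, SchwartzMap.smulLeftCLM_apply_apply χ.hasTemperateGrowth]
  simp [sq]

open FourierTransform in
lemma u_eq (χ : SchwartzMap ℝ ℝ) (φ : SchwartzMap ℝ ℂ) (hφ : ∀ x, φ x = ((χ x ^ 2 : ℝ) : ℂ)) :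
    ∃ C : ℝ, 0 < C ∧ ∀ t, u χ t = C * 𝓕 (trunc 3 φ) (t / (2 * Real.pi)) := by
  refine ⟨2 / (3 * (2 * Real.pi) ^ 3) * (3 * (volume : Measure (EuclideanSpace ℝ (Fin 3))).real (Metric.ball 0 1)), ?_, fun t => ?_⟩
  · have : 0 < (volume : Measure (EuclideanSpace ℝ (Fin 3))).real (Metric.ball 0 1) :=
      ENNReal.toReal_pos (Metric.measure_ball_pos _ _ one_pos).ne' measure_ball_lt_top.ne
    have := Real.pi_pos
    positivity
  · rw [u, integral_fun_norm_addHaar volume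
      (fun r : ℝ => (((χ r) ^ 2 * r : ℝ) : ℂ) * Complex.exp (-(t * r) * Complex.I))]
    have : 𝓕 (trunc 3 φ) (t / (2 * Real.pi)) = ∫ y in Set.Ioi (0 : ℝ),
        y ^ (Module.finrank ℝ (EuclideanSpace ℝ (Fin 3)) - 1) •
          ((((χ y) ^ 2 * y : ℝ) : ℂ) * Complex.exp (-(t * y) * Complex.I)) := by
      rw [Real.fourier_real_eq_integral_exp_smul, ← integral_indicator measurableSet_Ioi]
      congr 1
      ext y
      by_cases hy : 0 < y
      · rw [Set.indicator_of_mem (Set.mem_Ioi.2 hy), trunc, hφ, max_eq_left hy.le]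
        have : ((-2 * Real.pi * y * (t / (2 * Real.pi)) : ℝ) : ℂ) = -(t * y) := by
          rw [← Complex.ofReal_mul, ← Complex.ofReal_neg]
          congr 1
          have := Real.pi_pos.ne'
          field_simp
        rw [this]
        simp
        ring
      · rw [Set.indicator_of_notMem (by simpa using hy), trunc, max_eq_right (not_lt.1 hy)]
        simp
    rw [← this]
    simp
    ring

lemma u_conj (χ : SchwartzMap ℝ ℝ) (t : ℝ) : u χ (-t) = (starRingEnd ℂ) (u χ t) := by
  rw [u, u, map_mul, Complex.conj_ofReal, ← integral_conj]
  congr 2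
  ext k
  rw [map_mul, Complex.conj_ofReal, ← Complex.exp_conj]
  congr 2
  simp

open FourierTransform in
lemma dcoef_re (χ : SchwartzMap ℝ ℝ) : ∃ K : ℝ, 0 < K ∧ ∀ (β : ℝ) (m : ℤ),
    (dcoef χ β m).re = K * (max (2 * m * β) 0 ^ 3 * χ (2 * m * β) ^ 2) := by
  obtain ⟨φ, hφ⟩ := exists_sq χ
  obtain ⟨C, hC, hu⟩ := u_eq χ φ hφ
  have hpi := Real.pi_pos
  refine ⟨Real.pi * C, by positivity, fun β m => ?_⟩
  set F : ℝ → ℂ := fun t => u χ t * Complex.exp (2 * m * β * t * Complex.I) with hF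
  set P : ℝ → ℂ := fun s => Complex.exp (((2 * Real.pi * (s * (2 * m * β)) : ℝ) : ℂ) * Complex.I) • 𝓕 (trunc 3 φ) s with hP
  have hFP : ∀ t, F t = C * P (t / (2 * Real.pi)) := by
    intro t
    simp only [hF, hP, hu]
    have : (2 * m * β * t : ℂ) = ((2 * Real.pi * (t / (2 * Real.pi) * (2 * m * β)) : ℝ) : ℂ) := by
      have : 2 * Real.pi * (t / (2 * Real.pi) * (2 * m * β)) = 2 * m * β * t := by
        field_simp
      rw [this]; push_cast; ring
    rw [this, smul_eq_mul]; ring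
  have hPi : Integrable P := by
    refine (trunc_fourier_int φ).mono ?_ (Filter.Eventually.of_forall fun s => ?_)
    · refine AEStronglyMeasurable.smul (Continuous.aestronglyMeasurable (α := ℝ) (β := ℂ) ?_) (trunc_fourier_int φ).1
      fun_prop
    · simp only [hP]
      rw [norm_smul, Complex.norm_exp_ofReal_mul_I, one_mul]
  have hFi : Integrable F := by
    rw [funext hFP]
    exact (hPi.comp_div (by positivity)).const_mul _
  have hPint : ∫ s, P s = trunc 3 φ (2 * m * β) := by
    have h := congrFun ((trunc_cont 3 φ).fourierInv_fourier_eq (trunc_int 3 φ) (trunc_fourier_int φ)) (2 * m * β)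
    rw [← h, Real.fourierInv_eq']
    congr 1
    ext s
    simp only [hP]
    congr 4
    simp [mul_comm]
  have hFint : ∫ t, F t = C * (2 * Real.pi) * trunc 3 φ (2 * m * β) := by
    rw [funext hFP, integral_const_mul, Measure.integral_comp_div, hPint, abs_of_pos (by positivity)]
    simp; ring
  have hsplit : ∫ t, F t = dcoef χ β m + (starRingEnd ℂ) (dcoef χ β m) := by
    rw [← integral_add_compl (s := Set.Ioi (0 : ℝ)) measurableSet_Ioi hFi, Set.compl_Ioi]
    congr 1
    have := integral_comp_neg_Ioi 0 F
    rw [neg_zero] at this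
    rw [← this, dcoef, ← integral_conj]
    congr 1
    ext t
    simp only [hF]
    rw [u_conj, map_mul, ← Complex.exp_conj]
    congr 2
    have : (starRingEnd ℂ) 2 = 2 := Complex.conj_ofNat 2
    simp [this]
  rw [hFint, Complex.add_conj, trunc, hφ] at hsplit
  have h3 : C * (2 * Real.pi) * (max (2 * m * β) 0 ^ 3 * χ (2 * m * β) ^ 2) = 2 * (dcoef χ β m).re := by
    exact_mod_cast hsplit
  linarith

theorem stmt11 (χ : SchwartzMap ℝ ℝ) (β : ℝ) (hβ : 0 < β) :
    Lop (dcoef χ β 1) (dcoef χ β 0) (dcoef χ β (-1)) 1 = 0 ∧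
      ∃ μ1 μ0 μm1 : ℂ,
        Lop (dcoef χ β 1) (dcoef χ β 0) (dcoef χ β (-1)) (pσ 1) = μ1 • pσ 1 ∧
        Lop (dcoef χ β 1) (dcoef χ β 0) (dcoef χ β (-1)) (pσ 0 + 1) = μ0 • (pσ 0 + 1) ∧
        Lop (dcoef χ β 1) (dcoef χ β 0) (dcoef χ β (-1)) (pσ (-1)) = μm1 • pσ (-1) ∧
        μ1.re ≤ 0 ∧ μ0.re ≤ 0 ∧ μm1.re ≤ 0 ∧
        (0 < χ (2 * β) → μ1.re < 0 ∧ μ0.re < 0 ∧ μm1.re < 0) := by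
  obtain ⟨K, hK, h⟩ := dcoef_re χ
  have h1 := h β 1
  have h0 := h β 0
  have hm := h β (-1)
  have e1 : max (2 * β) 0 = 2 * β := max_eq_left (by linarith)
  have em : max (-(2 * β)) 0 = 0 := max_eq_right (by linarith)
  simp only [Int.cast_one, mul_one, e1] at h1
  simp at h0
  simp [em] at hm
  obtain ⟨a, μ1, μ0, μm1, b1, b2, b3, b4, b5, b6, b7⟩ :=
    final (dcoef χ β 1) (dcoef χ β 0) (dcoef χ β (-1)) (by rw [h1]; positivity) h0 hm
  exact ⟨a, μ1, μ0, μm1, b1, b2, b3, b4, b5, b6, fun hχ => b7 (by rw [h1]; positivity)⟩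
end
end
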